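/- Embedding of synchronous TeamLTL into ∀TeamCTL(⊆): define the translation (·)° from TeamLTL into ∀TeamCTL(⊆) recursively by p° = p, (¬p)° = ¬p, (φ∧ψ)° = φ°∧ψ°, (φ∨ψ)° = φ°∨ψ°, (Xφ)° = X_∀((o ⊆ ¬o) ∨ φ°), (φUψ)° = φ° U_∀ (ψ° ∨ (o ⊆ ¬o)), (φWψ)° = φ° W_∀ (ψ° ∨ (o ⊆ ¬o)). Let ψ''_synch := (o ∧ X_∀(¬o ∨ (o ⊆ ¬o))) ∨ (¬o ∧ X_∀(o ∨ (o ⊆ ¬o))). Then for every TeamLTL formula φ over AP and every nonempty team T over AP: T ⊨ₛ φ if and only if T_o ⊨∀ (φ° ∧ o ∧ (ψ''_synch W_∀ ⊥)). -/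

import Mathlib

namespace TTS




abbrev Trace (AP : Type) := ℕ → Set AP

def IsStutTef {ι : Type} (τ : ℕ → ι → ℕ) : Prop :=
  ∀ n i, τ n i ≤ τ (n + 1) i

def IsTef {ι : Type} (τ : ℕ → ι → ℕ) : Prop :=
  IsStutTef τ ∧ (∀ n, τ n ≠ τ (n + 1)) ∧ (∀ n i, τ (n + 1) i ≤ τ n i + 1)

def Initial {ι : Type} (τ : ℕ → ι → ℕ) : Prop := ∀ i, τ 0 i = 0

def shift {ι : Type} (τ : ℕ → ι → ℕ) (k : ℕ) : ℕ → ι → ℕ := fun n => τ (n + k)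

inductive Formula (AP : Type) : Type
  | atom : AP → Formula AP
  | natom : AP → Formula AP
  | and : Formula AP → Formula AP → Formula AP
  | or : Formula AP → Formula AP → Formula AP
  | X : Formula AP → Formula AP
  | U : Formula AP → Formula AP → Formula AP
  | W : Formula AP → Formula AP → Formula AP

def sat {AP : Type} : {ι : Type} → (ι → Trace AP) → (ℕ → ι → ℕ) → Formula AP → Prop
  | _, T, τ, .atom p => ∀ i, p ∈ T i (τ 0 i)
  | _, T, τ, .natom p => ∀ i, p ∉ T i (τ 0 i)
  | _, T, τ, .and φ ψ => sat T τ φ ∧ sat T τ ψ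
  | ι, T, τ, .or φ ψ =>
      ∃ P : ι → Prop,
        sat (fun i : {i // P i} => T i.1) (fun n i => τ n i.1) φ ∧
        sat (fun i : {i // ¬ P i} => T i.1) (fun n i => τ n i.1) ψ
  | _, T, τ, .X φ => sat T (shift τ 1) φ
  | _, T, τ, .U φ ψ =>
      ∃ k, sat T (shift τ k) ψ ∧ ∀ m, m < k → sat T (shift τ m) φ
  | _, T, τ, .W φ ψ =>
      ∀ k, sat T (shift τ k) φ ∨ ∃ m, m ≤ k ∧ sat T (shift τ m) ψ

def satE {AP ι : Type} (T : ι → Trace AP) (φ : Formula AP) : Prop :=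
  ∃ τ : ℕ → ι → ℕ, IsTef τ ∧ Initial τ ∧ sat T τ φ

def satA {AP ι : Type} (T : ι → Trace AP) (φ : Formula AP) : Prop :=
  ∀ τ : ℕ → ι → ℕ, IsTef τ → Initial τ → sat T τ φ

def satS {AP ι : Type} (T : ι → Trace AP) (φ : Formula AP) : Prop :=
  sat T (fun n _ => n) φ

def tshift {AP : Type} (t : Trace AP) (k : ℕ) : Trace AP := fun n => t (n + k)

def ltlSat {AP : Type} : Trace AP → Formula AP → Prop
  | t, .atom p => p ∈ t 0
  | t, .natom p => p ∉ t 0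
  | t, .and φ ψ => ltlSat t φ ∧ ltlSat t ψ
  | t, .or φ ψ => ltlSat t φ ∨ ltlSat t ψ
  | t, .X φ => ltlSat (tshift t 1) φ
  | t, .U φ ψ => ∃ k, ltlSat (tshift t k) ψ ∧ ∀ m, m < k → ltlSat (tshift t m) φ
  | t, .W φ ψ => ∀ k, ltlSat (tshift t k) φ ∨ ∃ m, m ≤ k ∧ ltlSat (tshift t m) ψ

/-- TeamCTL formulas with tef quantifiers and the inclusion atom p ⊆ ¬p
on an atomic proposition p. -/
inductive QFormula (AP : Type) : Type
  | atom : AP → QFormula AP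
  | natom : AP → QFormula AP
  | subNeg : AP → QFormula AP
  | and : QFormula AP → QFormula AP → QFormula AP
  | or : QFormula AP → QFormula AP → QFormula AP
  | X : QFormula AP → QFormula AP
  | U : QFormula AP → QFormula AP → QFormula AP
  | W : QFormula AP → QFormula AP → QFormula AP
  | Ex : QFormula AP → QFormula AP
  | All : QFormula AP → QFormula AP

def qsat {AP : Type} : {ι : Type} → (ι → Trace AP) → (ℕ → ι → ℕ) → QFormula AP → Prop
  | _, T, τ, .atom p => ∀ i, p ∈ T i (τ 0 i)
  | _, T, τ, .natom p => ∀ i, p ∉ T i (τ 0 i)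
  | _, T, τ, .subNeg p => ∀ i, ∃ j, (p ∈ T i (τ 0 i) ↔ p ∉ T j (τ 0 j))
  | _, T, τ, .and φ ψ => qsat T τ φ ∧ qsat T τ ψ
  | ι, T, τ, .or φ ψ =>
      ∃ P : ι → Prop,
        qsat (fun i : {i // P i} => T i.1) (fun n i => τ n i.1) φ ∧
        qsat (fun i : {i // ¬ P i} => T i.1) (fun n i => τ n i.1) ψ
  | _, T, τ, .X φ => qsat T (shift τ 1) φ
  | _, T, τ, .U φ ψ =>
      ∃ k, qsat T (shift τ k) ψ ∧ ∀ m, m < k → qsat T (shift τ m) φ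
  | _, T, τ, .W φ ψ =>
      ∀ k, qsat T (shift τ k) φ ∨ ∃ m, m ≤ k ∧ qsat T (shift τ m) ψ
  | _, T, τ, .Ex φ =>
      ∃ τ', IsTef τ' ∧ (∀ i, τ' 0 i = τ 0 i) ∧ qsat T τ' φ
  | _, T, τ, .All φ =>
      ∀ τ', IsTef τ' → (∀ i, τ' 0 i = τ 0 i) → qsat T τ' φ

def qsatA {AP ι : Type} (T : ι → Trace AP) (φ : QFormula AP) : Prop :=
  ∀ τ : ℕ → ι → ℕ, IsTef τ → Initial τ → qsat T τ φ

/-- The team T_o over AP ∪ {o}: the fresh proposition o (here: none) is added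
at exactly the even positions of every trace. -/
def addO {AP ι : Type} (T : ι → Trace AP) : ι → Trace (Option AP) :=
  fun i n => {x | (∃ p, x = some p ∧ p ∈ T i n) ∨ (x = none ∧ Even n)}

/-- The translation (·)° from TeamLTL over AP into ∀TeamCTL(⊆) over AP ∪ {o}:
(Xφ)° = X_∀((o ⊆ ¬o) ∨ φ°), (φUψ)° = φ° U_∀ (ψ° ∨ (o ⊆ ¬o)),
(φWψ)° = φ° W_∀ (ψ° ∨ (o ⊆ ¬o)). -/
def circ {AP : Type} : Formula AP → QFormula (Option AP)
  | .atom p => .atom (some p)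
  | .natom p => .natom (some p)
  | .and φ ψ => .and (circ φ) (circ ψ)
  | .or φ ψ => .or (circ φ) (circ ψ)
  | .X φ => .All (.X (.or (.subNeg none) (circ φ)))
  | .U φ ψ => .All (.U (circ φ) (.or (circ ψ) (.subNeg none)))
  | .W φ ψ => .All (.W (circ φ) (.or (circ ψ) (.subNeg none)))

/-- ψ''_synch := (o ∧ X_∀(¬o ∨ (o ⊆ ¬o))) ∨ (¬o ∧ X_∀(o ∨ (o ⊆ ¬o))). -/
def psiSynch'' (AP : Type) : QFormula (Option AP) :=
  .or (.and (.atom none) (.All (.X (.or (.natom none) (.subNeg none)))))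
      (.and (.natom none) (.All (.X (.or (.atom none) (.subNeg none)))))

/-!
In `T_o` the proposition `o` records the parity of each local clock, and it suffices to follow a
tef up to the first time it loses synchrony: there some trace has advanced and some has not, so
both parities occur and the inclusion atom `o ⊆ ¬o` releases the universally quantified modality.
At a synchronous position, on the other hand, `o ⊆ ¬o` fails on every nonempty subteam, so the
disjunct `o ⊆ ¬o` of the translation contributes nothing. Hence only the synchronous tef constrains
the translated formulas. By the same argument `ψ''_synch` holds everywhere on `T_o`.
-/

theorem shift_apply_zero {ι : Type} (τ : ℕ → ι → ℕ) (k : ℕ) : shift τ k 0 = τ k :=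
  congrArg τ (Nat.zero_add k)

section Tef

variable {ι κ : Type} {τ : ℕ → ι → ℕ}

theorem IsTef.comp_surjective (hτ : IsTef τ) {f : κ → ι} (hf : f.Surjective) :
    IsTef fun n i => τ n (f i) :=
  ⟨fun n i => hτ.1 n (f i), fun n h => hτ.2.1 n (hf.injective_comp_right h),
    fun n i => hτ.2.2 n (f i)⟩

theorem IsTef.nonempty (hτ : IsTef τ) : Nonempty ι := by
  by_contra hι
  rw [not_nonempty_iff] at hι
  exact hτ.2.1 0 (Subsingleton.elim _ _)

theorem IsTef.eq_or_eq_add_one (hτ : IsTef τ) (n : ℕ) (i : ι) :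
    τ (n + 1) i = τ n i ∨ τ (n + 1) i = τ n i + 1 := by
  have hmono := hτ.1 n i
  have hstep := hτ.2.2 n i
  omega

theorem IsTef.exists_eq_add_one (hτ : IsTef τ) (n : ℕ) : ∃ i, τ (n + 1) i = τ n i + 1 := by
  by_contra! h
  exact hτ.2.1 n (funext fun i => ((hτ.eq_or_eq_add_one n i).resolve_right (h i)).symm)

/-- The synchronous tef whose clocks all start at `n`; it is a tef only for nonempty `ι`. -/
def syncTef (ι : Type) (n : ℕ) : ℕ → ι → ℕ := fun m _ => m + n

theorem isTef_syncTef [Nonempty ι] (n : ℕ) : IsTef (syncTef ι n) := by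
  refine ⟨fun m _ => ?_, fun m h => ?_, fun m _ => ?_⟩
  · simp only [syncTef]
    omega
  · have hclock := congrFun h (Classical.arbitrary ι)
    simp only [syncTef] at hclock
    omega
  · simp only [syncTef]
    omega

theorem syncTef_zero_apply (n : ℕ) (i : ι) : syncTef ι n 0 i = n :=
  Nat.zero_add n

theorem shift_syncTef (n k : ℕ) : shift (syncTef ι n) k = syncTef ι (k + n) :=
  funext fun m => funext fun _ => Nat.add_assoc m k n

/-- Every clock of the configuration `c` has a clock of opposite parity. This is what `o ⊆ ¬o`
expresses on `T_o`; in particular it holds for the empty configuration. -/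
def MixedParity (c : ι → ℕ) : Prop := ∀ i, ∃ j, (Even (c i) ↔ ¬ Even (c j))

theorem MixedParity.of_even_iff_not_even {c : ι → ℕ} {a b : ι}
    (hab : Even (c a) ↔ ¬ Even (c b)) : MixedParity c := by
  intro i
  by_cases hi : Even (c i) ↔ Even (c a)
  · exact ⟨b, hi.trans hab⟩
  · exact ⟨a, by tauto⟩

theorem IsTef.forall_eq_add_one_or_mixedParity (hτ : IsTef τ) {n : ℕ}
    (hpar : ∀ i j, Even (τ n i) ↔ Even (τ n j)) :
    (∀ i, τ (n + 1) i = τ n i + 1) ∨ MixedParity (τ (n + 1)) := by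
  by_cases hadv : ∀ i, τ (n + 1) i = τ n i + 1
  · exact Or.inl hadv
  push Not at hadv
  obtain ⟨a, ha⟩ := hadv
  obtain ⟨b, hb⟩ := hτ.exists_eq_add_one n
  have hstay : τ (n + 1) a = τ n a := (hτ.eq_or_eq_add_one n a).resolve_right ha
  refine Or.inr (.of_even_iff_not_even (a := a) (b := b) ?_)
  rw [hstay, hb, Nat.even_add_one, not_not]
  exact hpar a b

theorem IsTef.sync_or_exists_mixedParity (hτ : IsTef τ) {n : ℕ} (h0 : ∀ i, τ 0 i = n) (k : ℕ) :
    (∀ m ≤ k, ∀ i, τ m i = m + n) ∨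
      ∃ j ≤ k, (∀ m < j, ∀ i, τ m i = m + n) ∧ MixedParity (τ j) := by
  induction k with
  | zero =>
    refine Or.inl fun m hm i => ?_
    rw [Nat.le_zero.1 hm, h0 i, Nat.zero_add]
  | succ k ih =>
    rcases ih with hsync | ⟨j, hj, hsync, hmixed⟩
    · have hk := hsync k le_rfl
      rcases hτ.forall_eq_add_one_or_mixedParity fun i i' => by rw [hk i, hk i'] with hadv | hmixed
      · refine Or.inl fun m hm i => ?_
        rcases Nat.le_succ_iff.1 hm with hm | rfl
        · exact hsync m hm i
        · rw [hadv i, hk i, Nat.succ_add]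
      · exact Or.inr ⟨k + 1, le_rfl, fun m hm => hsync m (Nat.le_of_lt_succ hm), hmixed⟩
    · exact Or.inr ⟨j, Nat.le_succ_of_le hj, hsync, hmixed⟩

end Tef

section TeamSemantics

variable {AP ι : Type}

theorem sat_of_isEmpty [IsEmpty ι] (T : ι → Trace AP) (τ : ℕ → ι → ℕ) (φ : Formula AP) :
    sat T τ φ := by
  induction φ generalizing ι with
  | atom p | natom p => exact isEmptyElim
  | and φ ψ ihφ ihψ => exact ⟨ihφ T τ, ihψ T τ⟩
  | or φ ψ ihφ ihψ => exact ⟨fun _ => True, ihφ _ _, ihψ _ _⟩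
  | X _ ih => exact ih T _
  | U _ _ _ ihψ => exact ⟨0, ihψ T _, nofun⟩
  | W _ _ ihφ _ => exact fun k => Or.inl (ihφ T _)

theorem qsat_comp_equiv {κ : Type} (e : κ ≃ ι) {T : ι → Trace AP} {τ : ℕ → ι → ℕ}
    {χ : QFormula AP} (h : qsat T τ χ) : qsat (fun i => T (e i)) (fun n i => τ n (e i)) χ := by
  induction χ generalizing ι κ with
  | atom p | natom p => exact fun i => h (e i)
  | subNeg p =>
    intro i
    obtain ⟨j, hj⟩ := h (e i)
    exact ⟨e.symm j, by simpa only [e.apply_symm_apply] using hj⟩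
  | and χ ψ ihχ ihψ => exact ⟨ihχ e h.1, ihψ e h.2⟩
  | or χ ψ ihχ ihψ =>
    obtain ⟨P, hχ, hψ⟩ := h
    exact ⟨fun i => P (e i), ihχ (e.subtypeEquiv fun _ => Iff.rfl) hχ,
      ihψ (e.subtypeEquiv fun _ => Iff.rfl) hψ⟩
  | X χ ih => exact ih e h
  | U χ ψ ihχ ihψ =>
    obtain ⟨k, hψ, hχ⟩ := h
    exact ⟨k, ihψ e hψ, fun m hm => ihχ e (hχ m hm)⟩
  | W χ ψ ihχ ihψ =>
    exact fun k => (h k).imp (ihχ e) fun ⟨m, hm, hψ⟩ => ⟨m, hm, ihψ e hψ⟩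
  | Ex χ ih =>
    obtain ⟨τ', hτ', h0, hχ⟩ := h
    exact ⟨_, hτ'.comp_surjective e.surjective, fun i => h0 (e i), ih e hχ⟩
  | All χ ih =>
    intro τ' hτ' h0
    have hχ := h (fun n i => τ' n (e.symm i)) (hτ'.comp_surjective e.symm.surjective)
      fun i => (h0 _).trans (congrArg (τ 0) (e.apply_symm_apply i))
    simpa only [e.symm_apply_apply] using ih e hχ

/-- The empty team property of team semantics. It is not automatic for `∃χ`: strict monotonicity
leaves the empty team without any tef. -/
def QFormula.EmptyTeamProperty (χ : QFormula AP) : Prop :=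
  ∀ ⦃ι : Type⦄ [IsEmpty ι] (T : ι → Trace AP) (τ : ℕ → ι → ℕ), qsat T τ χ

theorem QFormula.emptyTeamProperty_atom (p : AP) : (QFormula.atom p).EmptyTeamProperty :=
  fun _ _ _ _ => isEmptyElim

theorem QFormula.emptyTeamProperty_natom (p : AP) : (QFormula.natom p).EmptyTeamProperty :=
  fun _ _ _ _ => isEmptyElim

theorem QFormula.emptyTeamProperty_subNeg (p : AP) : (QFormula.subNeg p).EmptyTeamProperty :=
  fun _ _ _ _ => isEmptyElim

theorem QFormula.emptyTeamProperty_all (χ : QFormula AP) : (QFormula.All χ).EmptyTeamProperty :=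
  fun _ _ _ _ _ hτ => (not_isEmpty_iff.2 hτ.nonempty ‹_›).elim

variable {T : ι → Trace AP} {τ : ℕ → ι → ℕ} {χ ψ : QFormula AP}

theorem qsat_or_symm (h : qsat T τ (.or χ ψ)) : qsat T τ (.or ψ χ) := by
  obtain ⟨P, hχ, hψ⟩ := h
  exact ⟨fun i => ¬ P i, hψ, qsat_comp_equiv (Equiv.subtypeEquivRight fun _ => not_not) hχ⟩

theorem qsat_or_of_left (hψ : ψ.EmptyTeamProperty) (h : qsat T τ χ) : qsat T τ (.or χ ψ) :=
  have : IsEmpty {_i : ι // ¬ True} := ⟨fun i => i.2 trivial⟩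
  ⟨fun _ => True, qsat_comp_equiv (Equiv.subtypeUnivEquiv fun _ => trivial) h, hψ _ _⟩

theorem qsat_or_subNeg_iff {p : AP} (h : ∀ i j, p ∈ T i (τ 0 i) ↔ p ∈ T j (τ 0 j)) :
    qsat T τ (.or χ (.subNeg p)) ↔ qsat T τ χ := by
  refine ⟨?_, qsat_or_of_left (QFormula.emptyTeamProperty_subNeg p)⟩
  rintro ⟨P, hχ, hsub⟩
  have hP : ∀ i, P i := by
    intro i
    by_contra hi
    obtain ⟨j, hj⟩ := hsub ⟨i, hi⟩
    exact iff_not_self ((h i j).symm.trans hj)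
  exact qsat_comp_equiv (Equiv.subtypeUnivEquiv hP).symm hχ

end TeamSemantics

section ParityTeam

variable {AP ι : Type} {T : ι → Trace AP} {τ : ℕ → ι → ℕ}

theorem none_mem_addO {i : ι} {n : ℕ} : none ∈ addO T i n ↔ Even n := by
  simp [addO]

theorem some_mem_addO {i : ι} {n : ℕ} {p : AP} : some p ∈ addO T i n ↔ p ∈ T i n := by
  simp [addO]

theorem qsat_subNeg_addO_iff : qsat (addO T) τ (.subNeg none) ↔ MixedParity (τ 0) := by
  simp only [qsat, none_mem_addO, MixedParity]

theorem qsat_or_subNeg_of_mixedParity {χ : QFormula (Option AP)} (hχ : χ.EmptyTeamProperty) {k : ℕ}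
    (h : MixedParity (τ k)) : qsat (addO T) (shift τ k) (.or χ (.subNeg none)) :=
  qsat_or_symm <| qsat_or_of_left hχ <| qsat_subNeg_addO_iff.2 <| by rwa [shift_apply_zero]

theorem IsTef.qsat_next_or_subNeg (hτ : IsTef τ) (hpar : ∀ i j, Even (τ 0 i) ↔ Even (τ 0 j))
    {χ : QFormula (Option AP)} (hχ : χ.EmptyTeamProperty)
    (h : (∀ i, τ 1 i = τ 0 i + 1) → qsat (addO T) (shift τ 1) χ) :
    qsat (addO T) τ (.X (.or χ (.subNeg none))) := by
  rcases hτ.forall_eq_add_one_or_mixedParity hpar with hadv | hmixed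
  · exact qsat_or_of_left (QFormula.emptyTeamProperty_subNeg _) (h hadv)
  · exact qsat_or_subNeg_of_mixedParity hχ hmixed

theorem qsat_psiSynch'' (T : ι → Trace AP) (τ : ℕ → ι → ℕ) :
    qsat (addO T) τ (psiSynch'' AP) := by
  refine ⟨fun i => Even (τ 0 i), ⟨fun i => none_mem_addO.2 i.2, fun τ' hτ' h0 => ?_⟩,
    ⟨fun i => none_mem_addO.not.2 i.2, fun τ' hτ' h0 => ?_⟩⟩
  · have heven : ∀ i, Even (τ' 0 i) := fun i => (h0 i).symm ▸ i.2
    refine hτ'.qsat_next_or_subNeg (fun i j => iff_of_true (heven i) (heven j))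
      (QFormula.emptyTeamProperty_natom _) fun hadv i => none_mem_addO.not.2 ?_
    rw [shift_apply_zero, hadv, Nat.even_add_one, not_not]
    exact heven i
  · have hodd : ∀ i, ¬ Even (τ' 0 i) := fun i => (h0 i).symm ▸ i.2
    refine hτ'.qsat_next_or_subNeg (fun i j => iff_of_false (hodd i) (hodd j))
      (QFormula.emptyTeamProperty_atom _) fun hadv i => none_mem_addO.2 ?_
    rw [shift_apply_zero, hadv, Nat.even_add_one]
    exact hodd i

end ParityTeam

/-- `χ` expresses on `T_o`, at every synchronous position and whatever the tef does afterwards, what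
`φ` expresses on `T` along the synchronous tef from that position. All teams are quantified over, so
that the notion passes to the subteams of a disjunction. -/
def IsSyncTranslation {AP : Type} (χ : QFormula (Option AP)) (φ : Formula AP) : Prop :=
  ∀ ⦃ι : Type⦄ (T : ι → Trace AP) (τ : ℕ → ι → ℕ) (n : ℕ), (∀ i, τ 0 i = n) →
    (qsat (addO T) τ χ ↔ sat T (syncTef ι n) φ)

namespace IsSyncTranslation

variable {AP : Type} {χ χ' : QFormula (Option AP)} {φ ψ : Formula AP}

theorem shift_iff (h : IsSyncTranslation χ φ) {ι : Type} {T : ι → Trace AP} {τ : ℕ → ι → ℕ}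
    {k n : ℕ} (hk : ∀ i, τ k i = k + n) :
    qsat (addO T) (shift τ k) χ ↔ sat T (shift (syncTef ι n) k) φ := by
  rw [shift_syncTef]
  exact h T _ _ fun i => by rw [shift_apply_zero, hk]

theorem emptyTeamProperty (h : IsSyncTranslation χ φ) : χ.EmptyTeamProperty := by
  intro ι _ T τ
  have hempty : qsat (addO fun i : ι => isEmptyElim i) τ χ :=
    (h _ τ 0 isEmptyElim).2 (sat_of_isEmpty _ _ φ)
  rwa [Subsingleton.elim T]

theorem or_subNeg (h : IsSyncTranslation χ φ) : IsSyncTranslation (.or χ (.subNeg none)) φ := by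
  intro ι T τ n h0
  rw [← h T τ n h0]
  exact qsat_or_subNeg_iff fun i j => by rw [none_mem_addO, none_mem_addO, h0 i, h0 j]

theorem all
    (hsync : ∀ {ι : Type} (T : ι → Trace AP) (n : ℕ),
      qsat (addO T) (syncTef ι n) χ → sat T (syncTef ι n) φ)
    (htef : ∀ {ι : Type} (T : ι → Trace AP) (τ : ℕ → ι → ℕ) (n : ℕ), IsTef τ →
      (∀ i, τ 0 i = n) → sat T (syncTef ι n) φ → qsat (addO T) τ χ) :
    IsSyncTranslation (.All χ) φ := by
  intro ι T τ n h0
  rcases isEmpty_or_nonempty ι with _ | _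
  · exact iff_of_true (QFormula.emptyTeamProperty_all χ _ _) (sat_of_isEmpty T _ φ)
  constructor
  · exact fun h => hsync T n (h _ (isTef_syncTef n) fun i => by rw [syncTef_zero_apply, h0])
  · exact fun h τ' hτ' h0' => htef T τ' n hτ' (fun i => (h0' i).trans (h0 i)) h

theorem next (h : IsSyncTranslation χ φ) :
    IsSyncTranslation (.All (.X (.or (.subNeg none) χ))) (.X φ) := by
  refine all (fun T n hX => ?_) (fun T τ n hτ h0 hX => ?_)
  · exact (h.or_subNeg.shift_iff fun _ => rfl).1 (qsat_or_symm hX)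
  · refine qsat_or_symm (hτ.qsat_next_or_subNeg (fun i j => by rw [h0 i, h0 j])
      h.emptyTeamProperty fun hadv => (h.shift_iff fun i => ?_).2 hX)
    rw [hadv, h0, Nat.add_comm]

theorem strongUntil (h : IsSyncTranslation χ φ) (h' : IsSyncTranslation χ' ψ) :
    IsSyncTranslation (.All (.U χ (.or χ' (.subNeg none)))) (.U φ ψ) := by
  refine all (fun T n => ?_) (fun T τ n hτ h0 => ?_)
  · rintro ⟨k, hk, hlt⟩
    exact ⟨k, (h'.or_subNeg.shift_iff fun _ => rfl).1 hk,
      fun m hm => (h.shift_iff fun _ => rfl).1 (hlt m hm)⟩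
  · rintro ⟨k, hk, hlt⟩
    rcases hτ.sync_or_exists_mixedParity h0 k with hs | ⟨j, hj, hs, hmixed⟩
    · exact ⟨k, (h'.or_subNeg.shift_iff (hs k le_rfl)).2 hk,
        fun m hm => (h.shift_iff (hs m hm.le)).2 (hlt m hm)⟩
    · exact ⟨j, qsat_or_subNeg_of_mixedParity h'.emptyTeamProperty hmixed,
        fun m hm => (h.shift_iff (hs m hm)).2 (hlt m (hm.trans_le hj))⟩

theorem weakUntil (h : IsSyncTranslation χ φ) (h' : IsSyncTranslation χ' ψ) :
    IsSyncTranslation (.All (.W χ (.or χ' (.subNeg none)))) (.W φ ψ) := by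
  refine all (fun T n hW k => ?_) (fun T τ n hτ h0 hW k => ?_)
  · exact (hW k).imp (h.shift_iff fun _ => rfl).1
      fun ⟨m, hm, hψ⟩ => ⟨m, hm, (h'.or_subNeg.shift_iff fun _ => rfl).1 hψ⟩
  · rcases hτ.sync_or_exists_mixedParity h0 k with hs | ⟨j, hj, _, hmixed⟩
    · exact (hW k).imp (h.shift_iff (hs k le_rfl)).2
        fun ⟨m, hm, hψ⟩ => ⟨m, hm, (h'.or_subNeg.shift_iff (hs m hm)).2 hψ⟩
    · exact Or.inr ⟨j, hj, qsat_or_subNeg_of_mixedParity h'.emptyTeamProperty hmixed⟩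

end IsSyncTranslation

theorem isSyncTranslation_circ {AP : Type} (φ : Formula AP) : IsSyncTranslation (circ φ) φ := by
  induction φ with
  | atom p | natom p =>
    intro ι T τ n h0
    simp only [circ, qsat, sat, some_mem_addO, h0, syncTef_zero_apply]
  | and φ ψ ihφ ihψ => exact fun _ T τ n h0 => and_congr (ihφ T τ n h0) (ihψ T τ n h0)
  | or φ ψ ihφ ihψ =>
    exact fun _ T τ n h0 => exists_congr fun P =>
      and_congr (ihφ _ _ n fun i => h0 i) (ihψ _ _ n fun i => h0 i)
  | X φ ih => exact ih.next
  | U φ ψ ihφ ihψ => exact ihφ.strongUntil ihψ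
  | W φ ψ ihφ ihψ => exact ihφ.weakUntil ihψ

/-- Embedding of synchronous TeamLTL into ∀TeamCTL(⊆):
T ⊨ₛ φ iff T_o ⊨∀ (φ° ∧ o ∧ (ψ''_synch W_∀ ⊥)), with ⊥ := o ∧ ¬o. -/
theorem embed_sync_into_forallTeamCTL (AP ι : Type) (hne : Nonempty ι)
    (T : ι → Trace AP) (φ : Formula AP) :
    satS T φ ↔
      qsatA (addO T)
        (.and (circ φ)
          (.and (.atom none)
            (.All (.W (psiSynch'' AP) (.and (.atom none) (.natom none)))))) := by
  have htrans := isSyncTranslation_circ φ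
  constructor
  · intro h τ _ h0
    refine ⟨(htrans T τ 0 h0).2 h, fun i => none_mem_addO.2 ?_,
      fun τ' _ _ k => Or.inl (qsat_psiSynch'' T _)⟩
    rw [h0 i]
    exact Even.zero
  · intro h
    have hsync := h (syncTef ι 0) (isTef_syncTef 0) (syncTef_zero_apply 0)
    exact (htrans T _ 0 (syncTef_zero_apply 0)).1 hsync.1

end TTS
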